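/- Let c > 0 and p(n) = c/n. Let T be a finite set of pairwise non-isomorphic finite unicyclic graphs, and for H ∈ T let X_{n,H} be the number of connected components of G(n,p(n)) isomorphic to H, and set λ_H = (c·e^{−c})^{|H|}/aut(H), where |H| is the number of edges of H. Then the variables (X_{n,H})_{H∈T} converge jointly in distribution to independent Poisson random variables with means (λ_H)_{H∈T}: for all non-negative integers (a_H)_{H∈T}, lim_{n→∞} P(∧_{H∈T} X_{n,H} = a_H) = ∏_{H∈T} e^{−λ_H}·λ_H^{a_H}/a_H!. -/

import Mathlib

/-!
The proof is the method of factorial moments. For `b : Fin k → ℕ` let `E_n(b)` be the expectation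
of `∏ i, (X_i)_{b i}`, where `X_i` counts the components isomorphic to `H i` and `(x)_r` is the
falling factorial.

*Exact moments.* Multiplying `∏ i, (X_i)_{b i}` by `∏ i, aut(H i) ^ b i` counts the embeddings, as
a union of components, of the disjoint union of `b i` copies of each `H i`
(`card_isClosedEmb_eq_prod`; the components chosen for different `i` are automatically distinct
since the `H i` are pairwise non-isomorphic). This disjoint union has `M = ∑ i, b i * m i` vertices
and, the `H i` being unicyclic, also `M` edges. For a fixed injection of its vertices into `Fin n`,
being such an embedding prescribes the status of every pair meeting the range, so by linearity of
expectation (`factMoment_mul_prod_aut`)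
`E_n(b) * ∏ i, aut(H i) ^ b i = (n)_M * p ^ M * (1 - p) ^ (C(n,2) - C(n-M,2) - M)`.
With `p = c / n` this gives both `E_n(b) → ∏ i, λ_i ^ b i` (`tendsto_factMoment`) and the bound
`E_n(b) ≤ ∏ i, (c ^ m i) ^ b i`, uniform in `n` (`factMoment_le`).

*Inversion.* The identity `1[x = a] = ∑ r, (-1) ^ r / (a! r!) * (x)_{a+r}` expresses the point
probability at `a` as a series in the numbers `E_n(a + r)`, `r : Fin k → ℕ` (`gProb_eq_tsum`). The
uniform bound makes the series dominated by a product of exponential series, so the limit may be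
taken term by term, and the limiting series factors into the Poisson weights
(`hasSum_poisson_term`). No truncated inclusion-exclusion is needed.
-/

open Filter Topology FirstOrder

/-- Probability weight of a given graph outcome in `G(n,p)`. -/
noncomputable def gWeight (n : ℕ) (p : ℝ) (G : SimpleGraph (Fin n)) : ℝ :=
  p ^ G.edgeSet.ncard * (1 - p) ^ (n.choose 2 - G.edgeSet.ncard)

open scoped Classical in
/-- Probability of the event `A` under the binomial random graph `G(n,p)`. -/
noncomputable def gProb (n : ℕ) (p : ℝ) (A : SimpleGraph (Fin n) → Prop) : ℝ :=
  ∑ᶠ G : SimpleGraph (Fin n), if A G then gWeight n p G else 0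

/-- Expectation of `f` under the binomial random graph `G(n,p)`. -/
noncomputable def gExp (n : ℕ) (p : ℝ) (f : SimpleGraph (Fin n) → ℝ) : ℝ :=
  ∑ᶠ G : SimpleGraph (Fin n), gWeight n p G * f G

/-- A graph is unicyclic if it is connected and has as many edges as vertices
(equivalently, it is connected and contains exactly one cycle). -/
def IsUnicyclic {V : Type*} (G : SimpleGraph V) : Prop :=
  G.Connected ∧ G.edgeSet.ncard = Nat.card V

/-- The vertex set of the fragment of `G`: the union of the supports of the unicyclic
connected components of `G`. -/
def fragSet {V : Type*} (G : SimpleGraph V) : Set V :=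
  {v | IsUnicyclic (G.induce (G.connectedComponentMk v).supp)}
/-- The number of connected components of `G` isomorphic (as induced subgraphs) to `H`. -/
noncomputable def componentCount {V : Type*} (G : SimpleGraph V) {β : Type*}
    (H : SimpleGraph β) : ℕ :=
  Set.ncard {K : G.ConnectedComponent | Nonempty ((G.induce K.supp) ≃g H)}

/-! ### Prescribed patterns in the binomial random graph -/

open scoped Classical in
/-- Under `G(n,p)`, the edge slots in `D` show exactly the pattern `A ⊆ D` with probability
`p ^ |A| * (1 - p) ^ (|D| - |A|)`: the slots outside `D` sum out by the binomial theorem. -/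
lemma sum_gWeight_of_inter_eq (n : ℕ) (p : ℝ) (D A : Finset (Sym2 (Fin n)))
    (hD : D ⊆ (⊤ : SimpleGraph (Fin n)).edgeFinset) (hA : A ⊆ D) :
    ∑ G : SimpleGraph (Fin n), (if G.edgeFinset ∩ D = A then gWeight n p G else 0) =
      p ^ A.card * (1 - p) ^ (D.card - A.card) := by
  set E := (⊤ : SimpleGraph (Fin n)).edgeFinset with hE
  have hEc : E.card = n.choose 2 := by
    rw [hE, SimpleGraph.card_edgeFinset_top_eq_card_choose_two, Fintype.card_fin]
  have hDE := Finset.card_le_card hD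
  have hAD := Finset.card_le_card hA
  have hsum := Finset.sum_pow_mul_eq_add_pow p (1 - p) (E \ D)
  rw [add_sub_cancel, one_pow] at hsum
  trans p ^ A.card * (1 - p) ^ (D.card - A.card) *
      ∑ B ∈ (E \ D).powerset, p ^ B.card * (1 - p) ^ ((E \ D).card - B.card)
  swap
  · rw [hsum, mul_one]
  rw [← Finset.sum_filter, Finset.mul_sum]
  refine Finset.sum_bij' (fun G _ => G.edgeFinset \ D)
    (fun B _ => SimpleGraph.fromEdgeSet (↑(A ∪ B) : Set (Sym2 (Fin n)))) ?_ ?_ ?_ ?_ ?_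
  · intro G _
    rw [Finset.mem_powerset]
    exact Finset.sdiff_subset_sdiff (SimpleGraph.edgeFinset_mono le_top) le_rfl
  · intro B hB
    rw [Finset.mem_powerset] at hB
    simp only [Finset.mem_filter, Finset.mem_univ, true_and]
    ext e
    have h1 := @hB e
    have h2 := @hA e
    have h3 := @hD e
    simp only [hE, Finset.mem_sdiff, SimpleGraph.mem_edgeFinset, SimpleGraph.edgeSet_top, Set.mem_compl_iff] at h1 h3
    simp only [Finset.mem_inter, SimpleGraph.mem_edgeFinset, SimpleGraph.edgeSet_fromEdgeSet,
      Set.mem_sdiff, Finset.mem_coe, Finset.mem_union]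
    tauto
  · intro G hG
    simp only [Finset.mem_filter, Finset.mem_univ, true_and] at hG
    rw [← hG, Finset.union_comm, Finset.sdiff_union_inter, SimpleGraph.coe_edgeFinset,
      SimpleGraph.fromEdgeSet_edgeSet]
  · intro B hB
    rw [Finset.mem_powerset] at hB
    ext e
    have h1 := @hB e
    have h2 := @hA e
    simp only [hE, Finset.mem_sdiff, SimpleGraph.mem_edgeFinset, SimpleGraph.edgeSet_top, Set.mem_compl_iff] at h1
    simp only [Finset.mem_sdiff, SimpleGraph.mem_edgeFinset, SimpleGraph.edgeSet_fromEdgeSet,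
      Set.mem_sdiff, Finset.mem_coe, Finset.mem_union]
    tauto
  · intro G hG
    simp only [Finset.mem_filter, Finset.mem_univ, true_and] at hG
    have hc := Finset.card_sdiff_add_card_inter G.edgeFinset D
    rw [hG] at hc
    have hGE : (G.edgeFinset \ D).card ≤ (E \ D).card :=
      Finset.card_le_card
        (Finset.sdiff_subset_sdiff (SimpleGraph.edgeFinset_mono le_top) le_rfl)
    have hED : (E \ D).card = E.card - D.card := Finset.card_sdiff_of_subset hD
    have hG2 : G.edgeSet.ncard = G.edgeFinset.card := by
      rw [← SimpleGraph.coe_edgeFinset, Set.ncard_coe_finset]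
    rw [gWeight, hG2, ← hc, ← hEc, pow_add,
      show E.card - ((G.edgeFinset \ D).card + A.card)
        = (D.card - A.card) + ((E \ D).card - (G.edgeFinset \ D).card) by omega, pow_add]
    ring

/-- The assertion that `φ` embeds `F` into `G` as a union of connected components: the
neighbours in `G` of `φ v` are exactly the images of the neighbours of `v`. -/
def IsClosedEmb {V α : Type*} (F : SimpleGraph V) (G : SimpleGraph α) (φ : V ↪ α) : Prop :=
  ∀ v w, G.Adj (φ v) w ↔ ∃ u, F.Adj v u ∧ φ u = w

open scoped Classical in
/-- The probability that a fixed injection `φ` of the vertices of `F` is a closed embedding: every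
pair meeting the range of `φ` is prescribed, and exactly the images of the edges of `F` are
present. -/
lemma sum_gWeight_isClosedEmb {V : Type*} [Fintype V] (F : SimpleGraph V) (n : ℕ) (p : ℝ)
    (φ : V ↪ Fin n) :
    ∑ G : SimpleGraph (Fin n), (if IsClosedEmb F G φ then gWeight n p G else 0) =
      p ^ F.edgeFinset.card * (1 - p) ^
        (n.choose 2 - (n - Fintype.card V).choose 2 - F.edgeFinset.card) := by
  -- `R` collects the pairs avoiding the range of `φ`, and `A` the images of the edges of `F`
  set E := (⊤ : SimpleGraph (Fin n)).edgeFinset with hE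
  set C : Finset (Fin n) := Finset.univ \ Finset.univ.map φ with hC
  set R := Finset.image (Function.uncurry Sym2.mk) C.offDiag with hR
  set A := (F.map φ).edgeFinset with hA
  have hRE : R ⊆ E := by
    intro e he
    induction e with | _ x y
    simp only [hR, Finset.mem_image, Finset.mem_offDiag, Function.uncurry, Prod.exists] at he
    obtain ⟨a, b, ⟨-, -, hab⟩, h⟩ := he
    rw [hE, SimpleGraph.mem_edgeFinset, ← h]
    simpa using hab
  have hmem : ∀ x y, s(x, y) ∈ E \ R ↔ x ≠ y ∧ (x ∈ Set.range φ ∨ y ∈ Set.range φ) := by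
    intro x y
    have : s(x, y) ∈ R ↔ x ≠ y ∧ x ∉ Set.range φ ∧ y ∉ Set.range φ := by
      simp only [hR, hC, Finset.mem_image, Finset.mem_offDiag, Function.uncurry, Prod.exists,
        Finset.mem_sdiff, Finset.mem_univ, true_and, Finset.mem_map, Set.mem_range]
      constructor
      · rintro ⟨a, b, ⟨ha, hb, hab⟩, h⟩
        rcases Sym2.eq_iff.1 h with ⟨rfl, rfl⟩ | ⟨rfl, rfl⟩
        · exact ⟨hab, ha, hb⟩
        · exact ⟨hab.symm, hb, ha⟩
      · rintro ⟨h1, h2, h3⟩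
        exact ⟨x, y, ⟨h2, h3, h1⟩, rfl⟩
    rw [Finset.mem_sdiff, this, hE, SimpleGraph.mem_edgeFinset, SimpleGraph.mem_edgeSet,
      SimpleGraph.top_adj]
    tauto
  have hAdj : ∀ x y, s(x, y) ∈ A ↔ ∃ u v, F.Adj u v ∧ φ u = x ∧ φ v = y := by
    intro x y
    rw [hA, SimpleGraph.mem_edgeFinset, SimpleGraph.mem_edgeSet, SimpleGraph.map_adj]
  have hAD : A ⊆ E \ R := by
    intro e he
    induction e with | _ x y
    obtain ⟨u, v, huv, rfl, rfl⟩ := (hAdj x y).1 he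
    exact (hmem _ _).2 ⟨fun h => huv.ne (φ.injective h), Or.inl ⟨u, rfl⟩⟩
  have hcardA : A.card = F.edgeFinset.card := by
    rw [hA, ← Set.ncard_coe_finset, ← Set.ncard_coe_finset, SimpleGraph.coe_edgeFinset,
      SimpleGraph.coe_edgeFinset, SimpleGraph.edgeSet_map,
      Set.ncard_image_of_injective _ φ.sym2Map.injective]
  have hcardD : (E \ R).card = n.choose 2 - (n - Fintype.card V).choose 2 := by
    rw [Finset.card_sdiff_of_subset hRE, hE,
      SimpleGraph.card_edgeFinset_top_eq_card_choose_two, Fintype.card_fin, hR,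
      Sym2.card_image_offDiag, hC, Finset.card_sdiff_of_subset (Finset.subset_univ _),
      Finset.card_map, Finset.card_univ, Finset.card_univ, Fintype.card_fin]
  rw [← hcardA, ← hcardD, ← sum_gWeight_of_inter_eq n p _ _ Finset.sdiff_subset hAD]
  refine Finset.sum_congr rfl fun G _ => if_congr ?_ rfl rfl
  constructor
  · intro h
    ext e
    induction e with | _ x y
    rw [Finset.mem_inter, SimpleGraph.mem_edgeFinset, SimpleGraph.mem_edgeSet, hmem, hAdj]
    constructor
    · rintro ⟨hxy, -, ⟨v, rfl⟩ | ⟨v, rfl⟩⟩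
      · obtain ⟨u, hu, rfl⟩ := (h v _).1 hxy
        exact ⟨v, u, hu, rfl, rfl⟩
      · obtain ⟨u, hu, rfl⟩ := (h v _).1 hxy.symm
        exact ⟨u, v, hu.symm, rfl, rfl⟩
    · rintro ⟨u, v, huv, rfl, rfl⟩
      have := (h u (φ v)).2 ⟨v, huv, rfl⟩
      exact ⟨this, this.ne, Or.inl ⟨u, rfl⟩⟩
  · intro h v w
    have h' := Finset.ext_iff.1 h s(φ v, w)
    rw [Finset.mem_inter, SimpleGraph.mem_edgeFinset, SimpleGraph.mem_edgeSet, hmem, hAdj] at h'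
    constructor
    · intro hvw
      obtain ⟨u, u', huu, hu, rfl⟩ := h'.1 ⟨hvw, hvw.ne, Or.inl ⟨v, rfl⟩⟩
      rw [φ.injective hu] at huu
      exact ⟨u', huu, rfl⟩
    · rintro ⟨u, hu, rfl⟩
      exact (h'.2 ⟨v, u, hu, rfl, rfl⟩).1

/-! ### Counting embeddings onto unions of components -/

/-- The disjoint union of a family of graphs. -/
def sigmaGraph {S : Type*} {V : S → Type*} (F : ∀ s, SimpleGraph (V s)) :
    SimpleGraph (Σ s, V s) where
  Adj x y := ∃ h : x.1 = y.1, (F y.1).Adj (h ▸ x.2) y.2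
  symm := ⟨by
    rintro ⟨s, x⟩ ⟨t, y⟩ ⟨h, hxy⟩
    dsimp only at h
    subst h
    exact ⟨rfl, hxy.symm⟩⟩
  loopless := ⟨by
    rintro ⟨s, x⟩ ⟨h, hxy⟩
    exact hxy.ne rfl⟩

lemma sigmaGraph_adj_mk {S : Type*} {V : S → Type*} (F : ∀ s, SimpleGraph (V s)) (s : S)
    (x y : V s) : (sigmaGraph F).Adj ⟨s, x⟩ ⟨s, y⟩ ↔ (F s).Adj x y :=
  ⟨fun ⟨_, h⟩ => h, fun h => ⟨rfl, h⟩⟩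

lemma sigmaGraph_adj_mk_left {S : Type*} {V : S → Type*} (F : ∀ s, SimpleGraph (V s)) (s : S)
    (x : V s) (z : Σ s, V s) :
    (sigmaGraph F).Adj ⟨s, x⟩ z ↔ ∃ y, (F s).Adj x y ∧ z = ⟨s, y⟩ := by
  obtain ⟨t, y⟩ := z
  constructor
  · rintro ⟨h, hxy⟩
    dsimp only at h
    subst h
    exact ⟨y, hxy, rfl⟩
  · rintro ⟨y, hy, h⟩
    rw [h]
    exact (sigmaGraph_adj_mk F s x y).2 hy

open scoped Classical in
/-- Edges add up over a disjoint union, by comparing degree sums. -/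
lemma card_edgeFinset_sigmaGraph {S : Type*} [Fintype S] {V : S → Type*} [∀ s, Fintype (V s)]
    (F : ∀ s, SimpleGraph (V s)) :
    (sigmaGraph F).edgeFinset.card = ∑ s, (F s).edgeFinset.card := by
  have hdeg : ∀ s x, (sigmaGraph F).degree ⟨s, x⟩ = (F s).degree x := by
    intro s x
    rw [← SimpleGraph.card_neighborFinset_eq_degree, ← SimpleGraph.card_neighborFinset_eq_degree,
      ← Finset.card_map (Function.Embedding.sigmaMk s)]
    congr 1
    ext z
    rw [SimpleGraph.mem_neighborFinset, sigmaGraph_adj_mk_left]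
    simp [eq_comm]
  have h := (sigmaGraph F).sum_degrees_eq_twice_card_edges
  rw [Fintype.sum_sigma] at h
  simp only [hdeg, SimpleGraph.sum_degrees_eq_twice_card_edges] at h
  rw [← Finset.mul_sum] at h
  exact (Nat.eq_of_mul_eq_mul_left two_pos h).symm

/-- A choice of distinct components `K s` of `G`, together with isomorphisms `F s ≃g K s`, glues
to an embedding of the disjoint union of the `F s`. -/
def glueEmb {S : Type*} {V : S → Type*} {α : Type*} (F : ∀ s, SimpleGraph (V s))
    (G : SimpleGraph α)
    (q : Σ K : S ↪ G.ConnectedComponent, ∀ s, F s ≃g G.induce (K s).supp) :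
    (Σ s, V s) ↪ α where
  toFun z := (q.2 z.1 z.2 : α)
  inj' := by
    rintro ⟨s, x⟩ ⟨t, y⟩ h
    dsimp only at h
    have hs : q.1 s = q.1 t := by
      rw [← (q.2 s x).2, ← (q.2 t y).2]
      exact congrArg _ h
    obtain rfl := q.1.injective hs
    rw [(q.2 s).injective (Subtype.ext h)]

lemma isClosedEmb_glueEmb {S : Type*} {V : S → Type*} {α : Type*} (F : ∀ s, SimpleGraph (V s))
    (G : SimpleGraph α)
    (q : Σ K : S ↪ G.ConnectedComponent, ∀ s, F s ≃g G.induce (K s).supp) :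
    IsClosedEmb (sigmaGraph F) G (glueEmb F G q) := by
  rintro ⟨s, x⟩ w
  simp only [sigmaGraph_adj_mk_left]
  constructor
  · intro h
    have hw : w ∈ (q.1 s).supp :=
      ((q.1 s).mem_supp_congr_adj h).1 (q.2 s x).2
    obtain ⟨y, hy⟩ := (q.2 s).surjective ⟨w, hw⟩
    have hyw : (q.2 s y : α) = w := by rw [hy]
    refine ⟨⟨s, y⟩, ⟨y, ?_, rfl⟩, hyw⟩
    rw [← (q.2 s).map_adj_iff, SimpleGraph.induce_adj, hyw]
    exact h
  · rintro ⟨_, ⟨y, hy, rfl⟩, rfl⟩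
    exact (q.2 s).map_adj_iff.2 hy

/-- Embeddings of a disjoint union of connected graphs onto a union of components all arise by
gluing. -/
lemma card_isClosedEmb_sigmaGraph {S : Type*} {V : S → Type*} {α : Type*}
    (F : ∀ s, SimpleGraph (V s)) (hF : ∀ s, (F s).Connected) (G : SimpleGraph α) :
    Nat.card {φ : (Σ s, V s) ↪ α // IsClosedEmb (sigmaGraph F) G φ} =
      Nat.card (Σ K : S ↪ G.ConnectedComponent, ∀ s, F s ≃g G.induce (K s).supp) := by
  symm
  refine Nat.card_eq_of_bijective (fun q => ⟨glueEmb F G q, isClosedEmb_glueEmb F G q⟩) ⟨?_, ?_⟩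
  · rintro ⟨K, ψ⟩ ⟨K', ψ'⟩ h
    have h' : ∀ s x, (ψ s x : α) = ψ' s x := fun s x =>
      DFunLike.congr_fun (congrArg Subtype.val h) (⟨s, x⟩ : Σ s, V s)
    have hK : K = K' := by
      ext s
      obtain ⟨x⟩ := (hF s).nonempty
      rw [← (ψ s x).2, ← (ψ' s x).2, h']
    subst hK
    congr 1
    ext s x
    exact h' s x
  · rintro ⟨φ, hφ⟩
    have hadj : ∀ s x y, (F s).Adj x y → G.Adj (φ ⟨s, x⟩) (φ ⟨s, y⟩) := fun s x y h =>
      (hφ _ _).2 ⟨_, (sigmaGraph_adj_mk F s x y).2 h, rfl⟩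
    have hreach : ∀ s x y, G.Reachable (φ ⟨s, x⟩) (φ ⟨s, y⟩) := by
      intro s x y
      exact ((hF s).preconnected x y).map (⟨fun z => φ ⟨s, z⟩, fun h => hadj s _ _ h⟩ : F s →g G)
    -- a walk starting in the image of `V s` never leaves it
    have hclosed : ∀ s x w, G.Reachable (φ ⟨s, x⟩) w → ∃ y, φ ⟨s, y⟩ = w := by
      rintro s x w ⟨p⟩
      generalize hv : φ ⟨s, x⟩ = v at p
      induction p generalizing x with
      | nil => exact ⟨x, hv⟩
      | cons h _ ih =>
        subst hv
        obtain ⟨u, hu, rfl⟩ := (hφ _ _).1 h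
        obtain ⟨y, -, rfl⟩ := (sigmaGraph_adj_mk_left F s x u).1 hu
        exact ih y rfl
    let x₀ : ∀ s, V s := fun s => Classical.choice (hF s).nonempty
    let K : S ↪ G.ConnectedComponent :=
      ⟨fun s => G.connectedComponentMk (φ ⟨s, x₀ s⟩), fun s t h => by
        obtain ⟨y, hy⟩ := hclosed s (x₀ s) _ (SimpleGraph.ConnectedComponent.exact h)
        exact congrArg Sigma.fst (φ.injective hy)⟩
    have hmem : ∀ s x, φ ⟨s, x⟩ ∈ (K s).supp := fun s x =>
      SimpleGraph.ConnectedComponent.sound (hreach s x (x₀ s))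
    let ψ : ∀ s, F s ≃g G.induce (K s).supp := fun s =>
      { Equiv.ofBijective (fun x => (⟨φ ⟨s, x⟩, hmem s x⟩ : (K s).supp)) ⟨by
          intro x y h
          have := φ.injective (congrArg Subtype.val h)
          simpa using this, by
          rintro ⟨w, hw⟩
          obtain ⟨y, hy⟩ := hclosed s (x₀ s) w (SimpleGraph.ConnectedComponent.exact hw).symm
          exact ⟨y, Subtype.ext hy⟩⟩ with
        map_rel_iff' := by
          intro x y
          change G.Adj (φ ⟨s, x⟩) (φ ⟨s, y⟩) ↔ _
          refine ⟨fun h => ?_, hadj s x y⟩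
          obtain ⟨u, hu, hy⟩ := (hφ _ _).1 h
          rw [φ.injective hy] at hu
          exact (sigmaGraph_adj_mk F s x y).1 hu }
    exact ⟨⟨K, ψ⟩, Subtype.ext (Function.Embedding.ext fun z => rfl)⟩

/-- Embeddings of `Σ i, B i` into `C` sending the `i`-th block into the class `P i` split into one
embedding per block when the classes `P i` are disjoint. -/
def embSigmaEquiv {I C : Type*} {B : I → Type*} (P : I → C → Prop)
    (hP : ∀ i j c, P i c → P j c → i = j) :
    {K : (Σ i, B i) ↪ C // ∀ s, P s.1 (K s)} ≃ ∀ i, (B i ↪ {c // P i c}) where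
  toFun K i := ⟨fun x => ⟨K.1 ⟨i, x⟩, K.2 ⟨i, x⟩⟩, fun x y h => by
    have := K.1.injective (congrArg Subtype.val h)
    simpa using this⟩
  invFun f := ⟨⟨fun s => (f s.1 s.2).1, by
    rintro ⟨i, x⟩ ⟨j, y⟩ h
    dsimp only at h
    obtain rfl := hP i j _ (f i x).2 (h ▸ (f j y).2)
    rw [(f i).injective (Subtype.ext h)]⟩, fun s => (f s.1 s.2).2⟩
  left_inv K := rfl
  right_inv f := rfl

open scoped Classical in
/-- The isomorphisms onto a copy of `F` are a torsor under the automorphisms of `F`. -/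
lemma card_iso_eq_ite {V W : Type*} (F : SimpleGraph V) (F' : SimpleGraph W) :
    Nat.card (F ≃g F') = if Nonempty (F' ≃g F) then Nat.card (F ≃g F) else 0 := by
  split_ifs with h
  · obtain ⟨e⟩ := h
    exact Nat.card_congr
      ⟨fun f => f.trans e, fun f => f.trans e.symm, fun f => by ext; simp, fun f => by ext; simp⟩
  · have : IsEmpty (F ≃g F') := ⟨fun e => h ⟨e.symm⟩⟩
    exact Nat.card_of_isEmpty

/-- Counting embeddings of `b i` disjoint copies of each `H i` as components of `G`: choose
injectively the components, then an isomorphism onto each. -/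
lemma card_isClosedEmb_eq_prod {k : ℕ} (m : Fin k → ℕ) (H : ∀ i, SimpleGraph (Fin (m i)))
    (hH : ∀ i, (H i).Connected) (hpair : ∀ i j, i ≠ j → IsEmpty (H i ≃g H j)) (b : Fin k → ℕ)
    {n : ℕ} (G : SimpleGraph (Fin n)) :
    Nat.card {φ : (Σ s : (Σ i, Fin (b i)), Fin (m s.1)) ↪ Fin n //
        IsClosedEmb (sigmaGraph fun s : (Σ i, Fin (b i)) => H s.1) G φ} =
      ∏ i, (Nat.card (H i ≃g H i) ^ b i * (componentCount G (H i)).descFactorial (b i)) := by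
  classical
  have hfin : ∀ {V W : Type} [Finite V] [Finite W] (F : SimpleGraph V) (F' : SimpleGraph W),
      Finite (F ≃g F') := fun F F' => DFunLike.finite _
  rw [card_isClosedEmb_sigmaGraph _ (fun s => hH s.1), Nat.card_sigma]
  have h1 : ∀ K : (Σ i, Fin (b i)) ↪ G.ConnectedComponent,
      Nat.card (∀ s, H s.1 ≃g G.induce (K s).supp) =
      if ∀ s, Nonempty (G.induce (K s).supp ≃g H s.1)
        then ∏ i, Nat.card (H i ≃g H i) ^ b i else 0 := by
    intro K
    rw [Nat.card_pi, Finset.prod_congr rfl fun s _ => card_iso_eq_ite (H s.1) _,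
      Finset.prod_ite_zero]
    simp [Fintype.prod_sigma]
  rw [Finset.sum_congr rfl fun K _ => h1 K, ← Finset.sum_filter, Finset.sum_const, smul_eq_mul,
    Finset.prod_mul_distrib, mul_comm]
  congr 1
  rw [← Fintype.card_subtype, ← Nat.card_eq_fintype_card,
    Nat.card_congr (embSigmaEquiv
      (fun i (c : G.ConnectedComponent) => Nonempty (G.induce c.supp ≃g H i)) ?_), Nat.card_pi]
  · refine Finset.prod_congr rfl fun i _ => ?_
    rw [Nat.card_eq_fintype_card, Fintype.card_embedding_eq, Fintype.card_fin,
      ← Nat.card_eq_fintype_card]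
    rfl
  · rintro i j c ⟨e⟩ ⟨f⟩
    by_contra hij
    exact (hpair i j hij).false (e.symm.trans f)

/-! ### Factorial moments of the component counts -/

/-- The joint factorial moment `E[∏ i, (X_i)_{b i}]` of the component counts in `G(n,p)`. -/
noncomputable def factMoment {k : ℕ} {m : Fin k → ℕ} (H : ∀ i, SimpleGraph (Fin (m i)))
    (n : ℕ) (p : ℝ) (b : Fin k → ℕ) : ℝ :=
  gExp n p fun G => ∏ i, ((componentCount G (H i)).descFactorial (b i) : ℝ)

lemma gExp_eq_sum (n : ℕ) (p : ℝ) (f : SimpleGraph (Fin n) → ℝ) :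
    gExp n p f = ∑ G, gWeight n p G * f G :=
  finsum_eq_sum_of_fintype _

/-- The factorial moments are explicit, since the automorphism-weighted product of falling
factorials counts embeddings of one fixed graph with `M` vertices and `M` edges. -/
lemma factMoment_mul_prod_aut {k : ℕ} {m : Fin k → ℕ} (H : ∀ i, SimpleGraph (Fin (m i)))
    (hU : ∀ i, IsUnicyclic (H i)) (hpair : ∀ i j, i ≠ j → IsEmpty (H i ≃g H j))
    (n : ℕ) (p : ℝ) (b : Fin k → ℕ) {M : ℕ} (hM : M = ∑ i, b i * m i) :
    factMoment H n p b * ∏ i, (Nat.card (H i ≃g H i) : ℝ) ^ b i =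
      (n.descFactorial M : ℝ) *
        (p ^ M * (1 - p) ^ (n.choose 2 - (n - M).choose 2 - M)) := by
  classical
  set F := sigmaGraph fun s : (Σ i, Fin (b i)) => H s.1 with hF
  have hV : Fintype.card (Σ s : (Σ i, Fin (b i)), Fin (m s.1)) = M := by
    rw [Fintype.card_sigma, Fintype.sum_sigma, hM]
    simp
  have hE : F.edgeFinset.card = M := by
    rw [hF, card_edgeFinset_sigmaGraph, Fintype.sum_sigma, hM]
    refine Finset.sum_congr rfl fun i _ => ?_
    have := (hU i).2
    rw [← SimpleGraph.coe_edgeFinset, Set.ncard_coe_finset, Nat.card_eq_fintype_card,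
      Fintype.card_fin] at this
    simp [this]
  have hcount : ∀ G : SimpleGraph (Fin n),
      (∏ i, ((componentCount G (H i)).descFactorial (b i) : ℝ)) *
        ∏ i, (Nat.card (H i ≃g H i) : ℝ) ^ b i =
      ∑ φ : (Σ s : (Σ i, Fin (b i)), Fin (m s.1)) ↪ Fin n,
        if IsClosedEmb F G φ then (1 : ℝ) else 0 := by
    intro G
    have h := card_isClosedEmb_eq_prod m H (fun i => (hU i).1) hpair b G
    rw [Finset.sum_boole, ← Fintype.card_subtype, ← Nat.card_eq_fintype_card, h,
      ← Finset.prod_mul_distrib]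
    push_cast
    exact Finset.prod_congr rfl fun i _ => mul_comm _ _
  rw [factMoment, gExp_eq_sum, Finset.sum_mul]
  simp only [mul_assoc, hcount, Finset.mul_sum]
  rw [Finset.sum_comm]
  simp only [mul_ite, mul_one, mul_zero, sum_gWeight_isClosedEmb, hV, hE]
  rw [Finset.sum_const, Finset.card_univ, Fintype.card_embedding_eq, hV, Fintype.card_fin,
    nsmul_eq_mul]

lemma gWeight_nonneg (n : ℕ) {p : ℝ} (h0 : 0 ≤ p) (h1 : p ≤ 1) (G : SimpleGraph (Fin n)) :
    0 ≤ gWeight n p G :=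
  mul_nonneg (pow_nonneg h0 _) (pow_nonneg (sub_nonneg.2 h1) _)

lemma factMoment_nonneg {k : ℕ} {m : Fin k → ℕ} (H : ∀ i, SimpleGraph (Fin (m i)))
    (n : ℕ) {p : ℝ} (h0 : 0 ≤ p) (h1 : p ≤ 1) (b : Fin k → ℕ) : 0 ≤ factMoment H n p b := by
  rw [factMoment, gExp_eq_sum]
  exact Finset.sum_nonneg fun G _ => mul_nonneg (gWeight_nonneg n h0 h1 G) (by positivity)

lemma card_aut_pos {V : Type*} [Finite V] (F : SimpleGraph V) : 0 < Nat.card (F ≃g F) := by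
  have : Finite (F ≃g F) := DFunLike.finite _
  have : Nonempty (F ≃g F) := ⟨SimpleGraph.Iso.refl⟩
  exact Nat.card_pos

/-- A bound on the factorial moments that is uniform in `n`. -/
lemma factMoment_le {k : ℕ} {m : Fin k → ℕ} (H : ∀ i, SimpleGraph (Fin (m i)))
    (hU : ∀ i, IsUnicyclic (H i)) (hpair : ∀ i j, i ≠ j → IsEmpty (H i ≃g H j))
    (n : ℕ) {p c : ℝ} (h0 : 0 ≤ p) (h1 : p ≤ 1) (hc : n * p ≤ c) (b : Fin k → ℕ) :
    factMoment H n p b ≤ ∏ i, (c ^ m i) ^ b i := by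
  have h := factMoment_mul_prod_aut H hU hpair n p b rfl
  have haut : 1 ≤ ∏ i, (Nat.card (H i ≃g H i) : ℝ) ^ b i :=
    Finset.prod_induction _ (fun x : ℝ => 1 ≤ x) (fun x y => one_le_mul_of_one_le_of_one_le) le_rfl
      fun i _ => one_le_pow₀ (by exact_mod_cast card_aut_pos (H i))
  calc factMoment H n p b
      ≤ factMoment H n p b * ∏ i, (Nat.card (H i ≃g H i) : ℝ) ^ b i :=
        le_mul_of_one_le_right (factMoment_nonneg H n h0 h1 b) haut
    _ ≤ (n.descFactorial (∑ i, b i * m i) : ℝ) * (p ^ (∑ i, b i * m i) * 1) := by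
        rw [h]
        have : (1 - p) ^ (n.choose 2 - (n - ∑ i, b i * m i).choose 2 - ∑ i, b i * m i) ≤ 1 :=
          pow_le_one₀ (sub_nonneg.2 h1) (by linarith)
        gcongr
    _ ≤ (n : ℝ) ^ (∑ i, b i * m i) * (p ^ (∑ i, b i * m i) * 1) := by
        gcongr
        exact_mod_cast Nat.descFactorial_le_pow _ _
    _ = (n * p) ^ (∑ i, b i * m i) := by rw [mul_one, mul_pow]
    _ ≤ c ^ (∑ i, b i * m i) := pow_le_pow_left₀ (by positivity) hc _
    _ = ∏ i, (c ^ m i) ^ b i := by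
        rw [← Finset.prod_pow_eq_pow_sum]
        exact Finset.prod_congr rfl fun i _ => by rw [← pow_mul, mul_comm]

lemma choose_two_add (M d : ℕ) : (M + d).choose 2 = d.choose 2 + M * d + M.choose 2 := by
  have h : (((M + d).choose 2 : ℕ) : ℚ) = ((d.choose 2 + M * d + M.choose 2 : ℕ) : ℚ) := by
    push_cast
    rw [Nat.cast_choose_two, Nat.cast_choose_two, Nat.cast_choose_two]
    push_cast
    ring
  exact_mod_cast h

/-- The expected number of component embeddings of a graph with `M` vertices and `M` edges tends to
`(c * e ^ (-c)) ^ M`: there are about `n ^ M` injections, each with `M` prescribed edges and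
`n * M + O(1)` prescribed non-edges. -/
lemma tendsto_expected_embeddings {c : ℝ} (hc : 0 < c) (M : ℕ) :
    Tendsto (fun n : ℕ => (n.descFactorial M : ℝ) * ((min 1 (c / n)) ^ M *
      (1 - min 1 (c / n)) ^ (n.choose 2 - (n - M).choose 2 - M))) atTop
      (𝓝 ((c * Real.exp (-c)) ^ M)) := by
  have hdesc : Tendsto (fun n : ℕ => (n.descFactorial M : ℝ) / (n : ℝ) ^ M) atTop (𝓝 1) := by
    refine (Asymptotics.isEquivalent_iff_tendsto_one ?_).1 (isEquivalent_descFactorial M)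
    filter_upwards [eventually_ge_atTop 1] with n hn
    have : (n : ℝ) ≠ 0 := by positivity
    positivity
  have hq : Tendsto (fun n : ℕ => 1 + -c / (n : ℝ)) atTop (𝓝 1) := by
    simpa using (tendsto_const_div_atTop_nhds_zero_nat (-c)).const_add 1
  have hexp := Real.tendsto_one_add_div_pow_exp (-c)
  have hlim := (hdesc.mul_const (c ^ M)).mul
    (((hexp.pow M).mul (hq.pow (M.choose 2))).div (hq.pow (M * M + M)) (by simp))
  have hval : 1 * c ^ M * (Real.exp (-c) ^ M * 1 ^ M.choose 2 / 1 ^ (M * M + M)) =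
      (c * Real.exp (-c)) ^ M := by
    simp [mul_pow]
  rw [hval] at hlim
  refine hlim.congr' ?_
  filter_upwards [eventually_ge_atTop (M + 1), eventually_gt_atTop ⌈c⌉₊] with n hn hcn
  have hn0 : (0 : ℝ) < n := by exact_mod_cast (show 0 < n by omega)
  have hcn' : c < n := (Nat.le_ceil c).trans_lt (by exact_mod_cast hcn)
  have hp : min 1 (c / n) = c / n := min_eq_right ((div_le_one hn0).2 hcn'.le)
  have hq0 : 1 + -c / (n : ℝ) ≠ 0 := by
    have : c / n < 1 := (div_lt_one hn0).2 hcn'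
    rw [neg_div]
    linarith
  -- an additive form that avoids truncated subtraction; `n ≥ M + 1` makes every subtraction exact
  have hexpo : n.choose 2 - (n - M).choose 2 - M + (M * M + M) = n * M + M.choose 2 := by
    obtain ⟨d, rfl⟩ := Nat.exists_eq_add_of_le (show M ≤ n by omega)
    have hd : M * 1 ≤ M * d := Nat.mul_le_mul_left M (by omega)
    rw [choose_two_add, Nat.add_sub_cancel_left]
    have : (M + d) * M = M * M + M * d := by ring
    omega
  rw [hp, show (1 : ℝ) - c / n = 1 + -c / n by ring, div_pow, Pi.div_apply,
    ← pow_mul, ← pow_add, ← hexpo, pow_add, mul_div_cancel_right₀ _ (pow_ne_zero _ hq0)]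
  field_simp

lemma tendsto_factMoment {k : ℕ} {m : Fin k → ℕ} (H : ∀ i, SimpleGraph (Fin (m i)))
    (hU : ∀ i, IsUnicyclic (H i)) (hpair : ∀ i j, i ≠ j → IsEmpty (H i ≃g H j))
    {c : ℝ} (hc : 0 < c) (b : Fin k → ℕ) :
    Tendsto (fun n : ℕ => factMoment H n (min 1 (c / n)) b) atTop
      (𝓝 (∏ i, ((c * Real.exp (-c)) ^ (H i).edgeSet.ncard /
        (Nat.card (H i ≃g H i) : ℝ)) ^ b i)) := by
  have haut : ∏ i, (Nat.card (H i ≃g H i) : ℝ) ^ b i ≠ 0 :=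
    Finset.prod_ne_zero_iff.2 fun i _ =>
      pow_ne_zero _ (by exact_mod_cast (card_aut_pos (H i)).ne')
  have h := (tendsto_expected_embeddings hc (∑ i, b i * m i)).div_const
    (∏ i, (Nat.card (H i ≃g H i) : ℝ) ^ b i)
  have hval : (c * Real.exp (-c)) ^ (∑ i, b i * m i) /
      (∏ i, (Nat.card (H i ≃g H i) : ℝ) ^ b i) =
      ∏ i, ((c * Real.exp (-c)) ^ (H i).edgeSet.ncard /
        (Nat.card (H i ≃g H i) : ℝ)) ^ b i := by
    rw [← Finset.prod_pow_eq_pow_sum, ← Finset.prod_div_distrib]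
    refine Finset.prod_congr rfl fun i _ => ?_
    rw [(hU i).2, Nat.card_fin, div_pow, ← pow_mul, mul_comm (b i)]
  rw [hval] at h
  refine h.congr fun n => ?_
  rw [← factMoment_mul_prod_aut H hU hpair n _ b rfl, mul_div_cancel_right₀ _ haut]

/-! ### Inversion of factorial moments -/

/-- Inversion of factorial moments at a single integer: the indicator of `x = a` is an alternating
combination of the falling factorials of `x`. -/
lemma sum_descFactorial_eq_ite (a x N : ℕ) (hx : x ≤ N) :
    ∑ r ∈ Finset.range (N + 1),
      (-1 : ℝ) ^ r / (a.factorial * r.factorial) * (x.descFactorial (a + r) : ℝ) =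
      if x = a then 1 else 0 := by
  rcases lt_or_ge x a with h | h
  · rw [if_neg h.ne]
    refine Finset.sum_eq_zero fun r _ => ?_
    rw [Nat.descFactorial_of_lt (by omega), Nat.cast_zero, mul_zero]
  obtain ⟨d, rfl⟩ := Nat.exists_eq_add_of_le h
  have hterm : ∀ r, (-1 : ℝ) ^ r / (a.factorial * r.factorial) *
      ((a + d).descFactorial (a + r) : ℝ) =
      ((a + d).choose a : ℝ) * ((-1) ^ r * (d.choose r : ℝ)) := by
    intro r
    have h1 := Nat.descFactorial_mul_descFactorial (k := a) (m := a + r) (n := a + d) (by omega)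
    rw [Nat.add_sub_cancel_left, Nat.add_sub_cancel_left,
      Nat.descFactorial_eq_factorial_mul_choose d, Nat.descFactorial_eq_factorial_mul_choose _ a]
      at h1
    rw [← h1]
    push_cast
    have ha : (a.factorial : ℝ) ≠ 0 := by exact_mod_cast a.factorial_ne_zero
    have hr : (r.factorial : ℝ) ≠ 0 := by exact_mod_cast r.factorial_ne_zero
    field_simp
  rw [Finset.sum_congr rfl fun r _ => hterm r, ← Finset.mul_sum]
  have halt : ∑ r ∈ Finset.range (N + 1), (-1 : ℝ) ^ r * (d.choose r : ℝ) =
      if d = 0 then 1 else 0 := by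
    have h2 := congrArg (Int.cast : ℤ → ℝ) (Int.alternating_sum_range_choose (n := d))
    push_cast at h2
    rw [← h2]
    symm
    refine Finset.sum_subset (Finset.range_subset_range.2 (by omega)) fun r _ hr => ?_
    rw [Nat.choose_eq_zero_of_lt (by simpa using hr), Nat.cast_zero, mul_zero]
  rw [halt]
  rcases eq_or_ne d 0 with rfl | hd
  · simp
  · simp [hd]

lemma componentCount_le {n : ℕ} {β : Type*} (G : SimpleGraph (Fin n)) (H : SimpleGraph β) :
    componentCount G H ≤ n := by
  classical
  calc componentCount G H ≤ Nat.card G.ConnectedComponent := Set.ncard_le_card _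
    _ ≤ Nat.card (Fin n) := Nat.card_le_card_of_surjective G.connectedComponentMk Quot.mk_surjective
    _ = n := by simp

/-- Distributivity for absolutely convergent series: a product of `k` series is a series over
`Fin k → ℕ`. -/
lemma hasSum_pi_prod {k : ℕ} (f : Fin k → ℕ → ℝ) (s : Fin k → ℝ)
    (hf : ∀ i, HasSum (f i) (s i)) (hn : ∀ i, Summable fun r => ‖f i r‖) :
    HasSum (fun r : Fin k → ℕ => ∏ i, f i (r i)) (∏ i, s i) ∧
      Summable fun r : Fin k → ℕ => ‖∏ i, f i (r i)‖ := by
  induction k with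
  | zero =>
    constructor
    · simp
    · exact (hasSum_unique _).summable
  | succ k ih =>
    obtain ⟨h1, h2⟩ := ih (fun i => f i.succ) (fun i => s i.succ) (fun i => hf _) (fun i => hn _)
    have e : (fun r : Fin (k + 1) → ℕ => ∏ i, f i (r i)) ∘ (Fin.consEquiv fun _ => ℕ) =
        fun x : ℕ × (Fin k → ℕ) => f 0 x.1 * ∏ i : Fin k, f i.succ (x.2 i) := by
      funext x
      simp [Fin.prod_univ_succ]
    have e' : (fun r : Fin (k + 1) → ℕ => ‖∏ i, f i (r i)‖) ∘ (Fin.consEquiv fun _ => ℕ) =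
        fun x : ℕ × (Fin k → ℕ) => ‖f 0 x.1 * ∏ i : Fin k, f i.succ (x.2 i)‖ := by
      funext x
      simp [Fin.prod_univ_succ]
    rw [← (Fin.consEquiv fun _ => ℕ).hasSum_iff, ← (Fin.consEquiv fun _ => ℕ).summable_iff, e, e',
      Fin.prod_univ_succ]
    have h3 := summable_mul_of_summable_norm (f := f 0)
      (g := fun r : Fin k → ℕ => ∏ i : Fin k, f i.succ (r i)) (hn 0) h2
    have h4 := Summable.mul_norm (f := f 0)
      (g := fun r : Fin k → ℕ => ∏ i : Fin k, f i.succ (r i)) (hn 0) h2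
    have h5 := HasSum.mul (f := f 0)
      (g := fun r : Fin k → ℕ => ∏ i : Fin k, f i.succ (r i)) (hf 0) h1 h3
    exact ⟨h5, h4⟩

/-- The inversion series of `sum_descFactorial_eq_ite` applied to the factorial moments `l ^ b` of
the Poisson law gives the Poisson point probability at `a`. -/
lemma hasSum_poisson_term (a : ℕ) (l : ℝ) :
    HasSum (fun r : ℕ => (-1 : ℝ) ^ r / (a.factorial * r.factorial) * l ^ (a + r))
      (Real.exp (-l) * l ^ a / a.factorial) := by
  have h := (NormedSpace.expSeries_div_hasSum_exp (𝔸 := ℝ) (-l)).mul_left (l ^ a / a.factorial)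
  rw [← Real.exp_eq_exp_ℝ] at h
  have e : (fun r : ℕ => l ^ a / a.factorial * ((-l) ^ r / r.factorial)) =
      fun r : ℕ => (-1 : ℝ) ^ r / (a.factorial * r.factorial) * l ^ (a + r) := by
    funext r
    rw [neg_pow, pow_add]
    field_simp
  rwa [e, show l ^ a / a.factorial * Real.exp (-l) = Real.exp (-l) * l ^ a / a.factorial by ring]
    at h

/-- Absolute summability of the inversion series when the factorial moments are at most `l ^ b`. -/
lemma summable_poisson_term (a : ℕ) (l : ℝ) :
    Summable fun r : ℕ => 1 / ((a.factorial : ℝ) * r.factorial) * l ^ (a + r) := by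
  refine ((Real.summable_pow_div_factorial l).mul_left (l ^ a / a.factorial)).congr fun r => ?_
  rw [pow_add]
  field_simp

/-- The point probabilities of the component counts as a series in their factorial moments. -/
lemma gProb_eq_tsum {k : ℕ} {m : Fin k → ℕ} (H : ∀ i, SimpleGraph (Fin (m i)))
    (n : ℕ) (p : ℝ) (a : Fin k → ℕ) :
    gProb n p (fun G => ∀ i, componentCount G (H i) = a i) =
      ∑' r : Fin k → ℕ, (∏ i, (-1 : ℝ) ^ r i / ((a i).factorial * (r i).factorial)) *
        factMoment H n p (a + r) := by
  classical
  -- a component count is at most `n`, so only finitely many terms are nonzero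
  have hzero : ∀ r ∉ Fintype.piFinset fun _ : Fin k => Finset.range (n + 1),
      (∏ i, (-1 : ℝ) ^ r i / ((a i).factorial * (r i).factorial)) *
        factMoment H n p (a + r) = 0 := by
    intro r hr
    simp only [Fintype.mem_piFinset, Finset.mem_range, not_forall] at hr
    obtain ⟨i, hi⟩ := hr
    rw [factMoment, gExp_eq_sum, Finset.sum_eq_zero, mul_zero]
    intro G _
    have := componentCount_le G (H i)
    rw [Finset.prod_eq_zero (Finset.mem_univ i), mul_zero]
    rw [Pi.add_apply, Nat.descFactorial_of_lt (by omega), Nat.cast_zero]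
  rw [tsum_eq_sum hzero, gProb, finsum_eq_sum_of_fintype]
  simp only [factMoment, gExp_eq_sum, Finset.mul_sum]
  rw [Finset.sum_comm]
  refine Finset.sum_congr rfl fun G _ => ?_
  have hind : (∏ i, if componentCount G (H i) = a i then (1 : ℝ) else 0) =
      if ∀ i, componentCount G (H i) = a i then 1 else 0 := by
    rw [Finset.prod_ite_zero]
    simp
  have hexpand : (if ∀ i, componentCount G (H i) = a i then gWeight n p G else 0) =
      gWeight n p G * ∏ i, if componentCount G (H i) = a i then (1 : ℝ) else 0 := by
    rw [hind, mul_ite, mul_one, mul_zero]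
  refine Eq.trans (by split_ifs <;> rfl) (hexpand.trans ?_)
  rw [Finset.prod_congr rfl fun i _ => (sum_descFactorial_eq_ite (a i) _ n
    (componentCount_le G (H i))).symm, Finset.prod_univ_sum, Finset.mul_sum]
  refine Finset.sum_congr rfl fun r _ => ?_
  rw [Finset.prod_mul_distrib]
  simp only [Pi.add_apply]
  ring

/-! ### Convergence to the Poisson law -/

/-- For a finite family of pairwise non-isomorphic unicyclic graphs `H i`, the numbers of
connected components of `G(n,c/n)` isomorphic to `H i` converge jointly in distribution to
independent Poisson variables with means `λ_i = (c·e^{-c})^{|H i|}/aut(H i)`. -/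
theorem tendsto_componentCounts_poisson (c : ℝ) (hc : 0 < c) (k : ℕ) (m : Fin k → ℕ)
    (H : ∀ i, SimpleGraph (Fin (m i))) (hU : ∀ i, IsUnicyclic (H i))
    (hpair : ∀ i j, i ≠ j → IsEmpty (H i ≃g H j)) (a : Fin k → ℕ) :
    Tendsto
      (fun n : ℕ => gProb n (min 1 (c / n)) (fun G => ∀ i, componentCount G (H i) = a i))
      atTop
      (𝓝 (∏ i,
        Real.exp (-((c * Real.exp (-c)) ^ (H i).edgeSet.ncard /
            (Nat.card (H i ≃g H i) : ℝ))) *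
          ((c * Real.exp (-c)) ^ (H i).edgeSet.ncard / (Nat.card (H i ≃g H i) : ℝ)) ^ a i /
          (a i).factorial)) := by
  simp only [gProb_eq_tsum]
  set l : Fin k → ℝ := fun i => (c * Real.exp (-c)) ^ (H i).edgeSet.ncard /
    (Nat.card (H i ≃g H i) : ℝ) with hl
  have hsum := (hasSum_pi_prod _ _ (fun i => hasSum_poisson_term (a i) (l i)) fun i =>
    (hasSum_poisson_term (a i) (l i)).summable.norm).1
  have hbound := (hasSum_pi_prod _ _
    (fun i => (summable_poisson_term (a i) (c ^ m i)).hasSum) fun i =>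
    (summable_poisson_term (a i) (c ^ m i)).norm).1.summable
  rw [← hsum.tsum_eq]
  refine tendsto_tsum_of_dominated_convergence hbound (fun r => ?_) ?_
  · have h := (tendsto_factMoment H hU hpair hc (a + r)).const_mul
      (∏ i, (-1 : ℝ) ^ r i / ((a i).factorial * (r i).factorial))
    rw [← Finset.prod_mul_distrib] at h
    exact h
  · filter_upwards [eventually_ge_atTop 1] with n hn r
    have hn0 : (0 : ℝ) < n := by exact_mod_cast hn
    have h0 : 0 ≤ min 1 (c / n) := le_min zero_le_one (by positivity)
    have h1 : min 1 (c / n) ≤ 1 := min_le_left _ _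
    have hnc : n * min 1 (c / n) ≤ c :=
      calc n * min 1 (c / n) ≤ n * (c / n) := by gcongr; exact min_le_right _ _
        _ = c := by field_simp
    have hle := factMoment_le H hU hpair n h0 h1 hnc (a + r)
    rw [norm_mul, Real.norm_of_nonneg (factMoment_nonneg H n h0 h1 _), norm_prod,
      Finset.prod_mul_distrib]
    have hcoef : ∀ i, ‖(-1 : ℝ) ^ r i / ((a i).factorial * (r i).factorial)‖ =
        1 / ((a i).factorial * (r i).factorial) := by
      intro i
      rw [norm_div, norm_pow, norm_neg, norm_one, one_pow, Real.norm_of_nonneg (by positivity)]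
    simp only [hcoef]
    exact mul_le_mul_of_nonneg_left hle (Finset.prod_nonneg fun i _ => by positivity)
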